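/- arXiv:2209.05334 — 5 statements merged into one kernel-verified Lean document; each statement's English description precedes it below -/
import Mathlib

section
/- Green–Rees Theorem: for all nonempty words v, w ∈ A⁺, v ∼ w if and only if the following three conditions hold: (i) cont(v) = cont(w); (ii) v∘α ∼ w∘α for every α ∈ {0,1}; and (iii) v∗α = w∗α for every α ∈ {0,1}. -/
/-!
The forward implication rests on invariants of `∼` that can be read off the generators: the set of
letters of a word and, for each letter `a`, the `∼`-class of the prefix preceding the first
occurrence of `a` (`Sim.takeWhile`).  The letter `w ∗ 0` is the unique letter `a` of `w` whose
preceding prefix contains every other letter of `w`, and `w ∘ 0` is that prefix (`exists_dec`,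
`Dec.of_sim`), so both are determined, the latter up to `∼`, by the class of `w`.  Reversal of words
preserves `∼` and gives the statements for `∘ 1` and `∗ 1`.

For the converse, words with the same content form a rectangular band modulo `∼`:  `w x w ∼ w`
whenever `cont x ⊆ cont w` (`sim_sandwich`).  Writing `P = (w ∘ 0)(w ∗ 0)` and
`Q = (w ∗ 1)(w ∘ 1)`, the word `w` has `P` as a prefix and `Q` as a suffix, and
`w ∼ w w = P x Q ∼ (P Q P) x (Q P Q) = (P Q)(P x Q)(P Q) ∼ P Q` (`sim_of_prefix_suffix`).
So the data in (ii) and (iii) determine the class of `w`.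
-/

/-!
Common definitions: words over an alphabet `A` are `List A`; the free monoid
operation is `++` with identity `[]`.  `false` plays the role of `0` and
`true` the role of `1` in `{0,1}*`.
-/

namespace FreeBand

variable {A : Type*}

/-- The content of a word: the set of letters occurring in it. -/
def cont [DecidableEq A] (w : List A) : Finset A := w.toFinset

/-- The length of the longest prefix of `w` whose content has one fewer letter
than the content of `w`. -/
def prefLen [DecidableEq A] (w : List A) : ℕ :=
  Nat.findGreatest (fun k => (cont (w.take k)).card = (cont w).card - 1) w.length

/-- `w ∘ 0`: the longest prefix of `w` whose content has one fewer letter than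
that of `w`; undefined (`none`) on the empty word. -/
def circ0 [DecidableEq A] (w : List A) : Option (List A) :=
  if w = [] then none else some (w.take (prefLen w))

/-- `w ∗ 0`: the letter of `w` immediately following the prefix `w ∘ 0`. -/
def star0 [DecidableEq A] (w : List A) : Option A := w[prefLen w]?

/-- `w ∘ 1`: the longest suffix of `w` whose content has one fewer letter than
that of `w` (obtained by reversal from `circ0`); undefined on the empty word. -/
def circ1 [DecidableEq A] (w : List A) : Option (List A) :=
  (circ0 w.reverse).map List.reverse

/-- `w ∗ 1`: the letter of `w` immediately preceding the suffix `w ∘ 1`. -/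
def star1 [DecidableEq A] (w : List A) : Option A := star0 w.reverse

/-- `w ∘ b` for a single letter `b ∈ {0,1}` (`false = 0`, `true = 1`). -/
def circb [DecidableEq A] (w : List A) (b : Bool) : Option (List A) :=
  bif b then circ1 w else circ0 w

/-- `w ∗ b` for a single letter `b ∈ {0,1}` (`false = 0`, `true = 1`). -/
def starb [DecidableEq A] (w : List A) (b : Bool) : Option A :=
  bif b then star1 w else star0 w

/-- The partial map `∘ : A* × {0,1}* → A*`:  `w ∘ ε = w` and
`w ∘ (βγ) = (w ∘ β) ∘ γ`; any expression with an undefined subterm is undefined. -/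
def circw [DecidableEq A] : List A → List Bool → Option (List A)
  | w, [] => some w
  | w, b :: α => (circb w b).bind fun v => circw v α

/-- The partial map `∗ : A* × {0,1}* → A`:  `w ∗ ε = ⊥`, `w ∗ β` for a single
letter `β` is given by `starb`, and `w ∗ (βγ) = (w ∘ β) ∗ γ` for `γ ≠ ε`. -/
def starw [DecidableEq A] : List A → List Bool → Option A
  | _, [] => none
  | w, [b] => starb w b
  | w, b :: α => (circb w b).bind fun v => starw v α

/-- The least congruence `∼` on the free monoid `A*` containing `(w², w)` for
every word `w ∈ A*`. -/
inductive Sim : List A → List A → Prop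
  | sq (w : List A) : Sim (w ++ w) w
  | refl (w : List A) : Sim w w
  | symm {u v : List A} : Sim u v → Sim v u
  | trans {u v w : List A} : Sim u v → Sim v w → Sim u w
  | append {u v u' v' : List A} : Sim u v → Sim u' v' → Sim (u ++ u') (v ++ v')

/-- The partial function `f_w : {0,1}* → A*`:  `f_ε(ε) = ε`, `f_ε(α) = ⊥` for
`α ≠ ε`, `f_w(ε) = ⊥` for `w ≠ ε`, and `f_w(βγ) = (w ∗ β) · f_{w ∘ β}(γ)`. -/
def fword [DecidableEq A] : List A → List Bool → Option (List A)
  | w, [] => if w = [] then some [] else none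
  | w, b :: γ =>
      (starb w b).bind fun a =>
        (circb w b).bind fun v =>
          (fword v γ).map fun u => a :: u

/-- `K₀(v, w)`: the least `k ≥ 1` such that `w ∗ 0^k` is defined and does not
belong to `cont v`, if such `k` exists; undefined otherwise. -/
noncomputable def K0 [DecidableEq A] (v w : List A) : Option ℕ :=
  letI : DecidablePred fun k =>
      1 ≤ k ∧ ∃ a, starw w (List.replicate k false) = some a ∧ a ∉ cont v :=
    Classical.decPred _
  letI : Decidable (∃ k, 1 ≤ k ∧ ∃ a,
      starw w (List.replicate k false) = some a ∧ a ∉ cont v) := Classical.dec _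
  if h : ∃ k, 1 ≤ k ∧ ∃ a, starw w (List.replicate k false) = some a ∧ a ∉ cont v
  then some (Nat.find h) else none

/-- `K₁(v, w)`: the least `l ≥ 1` such that `v ∗ 1^l` is defined and does not
belong to `cont w`, if such `l` exists; undefined otherwise. -/
noncomputable def K1 [DecidableEq A] (v w : List A) : Option ℕ :=
  letI : DecidablePred fun l =>
      1 ≤ l ∧ ∃ a, starw v (List.replicate l true) = some a ∧ a ∉ cont w :=
    Classical.decPred _
  letI : Decidable (∃ l, 1 ≤ l ∧ ∃ a,
      starw v (List.replicate l true) = some a ∧ a ∉ cont w) := Classical.dec _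
  if h : ∃ l, 1 ≤ l ∧ ∃ a, starw v (List.replicate l true) = some a ∧ a ∉ cont w
  then some (Nat.find h) else none

/-- `m` is the short-lex least word `∼`-equivalent to `w`:  `m ∼ w` and `m` is
`≤` every word `∼`-equivalent to `w` in the short-lex order (length first, then
lexicographic order induced by the linear order on `A`). -/
def IsMinRep [LinearOrder A] (w m : List A) : Prop :=
  Sim m w ∧ ∀ u : List A, Sim u w →
    m = u ∨ m.length < u.length ∨ (m.length = u.length ∧ List.Lex (· < ·) m u)

theorem Sim.mem_iff {u v : List A} (h : Sim u v) (x : A) : x ∈ u ↔ x ∈ v := by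
  induction h with
  | sq w => simp
  | refl w => rfl
  | symm _ ih => exact ih.symm
  | trans _ _ ih₁ ih₂ => exact ih₁.trans ih₂
  | append _ _ ih₁ ih₂ => simp [ih₁, ih₂]

theorem Sim.reverse {u v : List A} (h : Sim u v) : Sim u.reverse v.reverse := by
  induction h with
  | sq w => rw [List.reverse_append]; exact Sim.sq _
  | refl w => exact Sim.refl _
  | symm _ ih => exact ih.symm
  | trans _ _ ih₁ ih₂ => exact ih₁.trans ih₂
  | append _ _ ih₁ ih₂ => rw [List.reverse_append, List.reverse_append]; exact ih₂.append ih₁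

theorem takeWhile_ne_append [DecidableEq A] (a : A) (u v : List A) :
    (u ++ v).takeWhile (· ≠ a) =
      if a ∈ u then u.takeWhile (· ≠ a) else u ++ v.takeWhile (· ≠ a) := by
  induction u with
  | nil => simp
  | cons b u ih =>
    by_cases hb : b = a
    · simp [hb]
    · have hb' : a ≠ b := fun h => hb h.symm
      rw [List.cons_append, List.takeWhile_cons_of_pos (by simpa using hb),
        List.takeWhile_cons_of_pos (by simpa using hb), ih]
      by_cases ha : a ∈ u <;> simp [ha, hb']

theorem takeWhile_ne_of_not_mem [DecidableEq A] {a : A} {u : List A} (h : a ∉ u) :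
    u.takeWhile (· ≠ a) = u := by
  have := takeWhile_ne_append a u []
  simpa [h] using this

/-- The class of the prefix preceding the first occurrence of a letter `a` (the whole word if
`a` does not occur) is an invariant of `∼`. -/
theorem Sim.takeWhile [DecidableEq A] {u v : List A} (h : Sim u v) (a : A) :
    Sim (u.takeWhile (· ≠ a)) (v.takeWhile (· ≠ a)) := by
  induction h with
  | sq w =>
    rw [takeWhile_ne_append]
    split_ifs with ha
    · exact Sim.refl _
    · rw [takeWhile_ne_of_not_mem ha]; exact Sim.sq _
  | refl w => exact Sim.refl _
  | symm _ ih => exact ih.symm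
  | trans _ _ ih₁ ih₂ => exact ih₁.trans ih₂
  | @append u v u' v' h₁ h₂ ih₁ ih₂ =>
    rw [takeWhile_ne_append, takeWhile_ne_append]
    by_cases ha : a ∈ u
    · rw [if_pos ha, if_pos ((h₁.mem_iff a).1 ha)]; exact ih₁
    · rw [if_neg ha, if_neg (fun h => ha ((h₁.mem_iff a).2 h))]; exact h₁.append ih₂

/-- `Dec w p a`: the letter `a` occurs in `w`, its first occurrence is preceded by the prefix `p`,
and every letter of `w` other than `a` occurs in `p`.  So `p = w ∘ 0` and `a = w ∗ 0`
(`Dec.circ0_eq`, `Dec.star0_eq`). -/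
def Dec (w p : List A) (a : A) : Prop :=
  a ∉ p ∧ (∃ r, w = p ++ a :: r) ∧ ∀ x ∈ w, x = a ∨ x ∈ p

theorem exists_dec (w : List A) (hw : w ≠ []) : ∃ p a, Dec w p a := by
  induction w using List.reverseRecOn with
  | nil => exact absurd rfl hw
  | append_singleton w c ih =>
    by_cases hc : c ∈ w
    · obtain ⟨p, a, ha, ⟨r, hr⟩, hall⟩ := ih (List.ne_nil_of_mem hc)
      refine ⟨p, a, ha, ⟨r ++ [c], by simp [hr]⟩, fun x hx => hall x ?_⟩
      rcases List.mem_append.1 hx with h | h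
      · exact h
      · rwa [List.mem_singleton.1 h]
    · exact ⟨w, c, hc, ⟨[], rfl⟩, fun x hx => by simpa [or_comm] using hx⟩

theorem Dec.prefLen_eq [DecidableEq A] {w p : List A} {a : A} (h : Dec w p a) :
    prefLen w = p.length := by
  obtain ⟨ha, ⟨r, rfl⟩, hall⟩ := h
  have hc : cont (p ++ a :: r) = insert a (cont p) := by
    ext x
    simp only [cont, List.mem_toFinset, Finset.mem_insert]
    refine ⟨hall x, ?_⟩
    rintro (rfl | h) <;> simp [*]
  have ha' : a ∉ cont p := by simpa [cont] using ha
  have hcard : (cont (p ++ a :: r)).card = (cont p).card + 1 := by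
    rw [hc, Finset.card_insert_of_notMem ha']
  unfold prefLen
  rw [Nat.findGreatest_eq_iff]
  refine ⟨by simp, fun _ => by simp [hcard], fun n hn _ heq => ?_⟩
  -- A prefix longer than `p` contains `p ++ [a]`, hence has full content.
  have hsub : cont (p ++ a :: r) ⊆ cont ((p ++ a :: r).take n) := by
    rw [hc]
    intro x hx
    obtain ⟨k, rfl⟩ := Nat.exists_eq_add_of_lt hn
    have : (p ++ a :: r).take (p.length + k + 1) = p ++ a :: r.take k := by
      rw [Nat.add_assoc, List.take_length_add_append, List.take_succ_cons]
    rw [this]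
    simp only [cont, List.mem_toFinset, Finset.mem_insert] at hx ⊢
    rcases hx with rfl | hx <;> simp [*]
  have := Finset.card_le_card hsub
  omega

theorem Dec.circ0_eq [DecidableEq A] {w p : List A} {a : A} (h : Dec w p a) :
    circ0 w = some p := by
  have hl := h.prefLen_eq
  obtain ⟨-, ⟨r, rfl⟩, -⟩ := h
  simp [circ0, hl]

theorem Dec.star0_eq [DecidableEq A] {w p : List A} {a : A} (h : Dec w p a) :
    star0 w = some a := by
  have hl := h.prefLen_eq
  obtain ⟨-, ⟨r, rfl⟩, -⟩ := h
  simp [star0, hl]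

theorem Dec.of_sim {v w p : List A} {a : A} (h : Sim v w) (hv : Dec v p a) :
    ∃ q, Sim p q ∧ Dec w q a := by
  classical
  obtain ⟨ha, ⟨r, rfl⟩, hall⟩ := hv
  have haw : a ∈ w := (h.mem_iff a).1 (by simp)
  obtain ⟨q, s, rfl, hq⟩ := List.eq_append_cons_of_mem haw
  -- `p` and `q` are the prefixes preceding the first occurrences of `a`.
  have hpq : Sim p q := by
    have := h.takeWhile a
    rw [takeWhile_ne_append, takeWhile_ne_append, if_neg ha, if_neg hq] at this
    simpa using this
  exact ⟨q, hpq, hq, ⟨s, rfl⟩, fun x hx =>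
    (hall x ((h.mem_iff x).2 hx)).imp_right (hpq.mem_iff x).1⟩

theorem Sim.left_data [DecidableEq A] {v w : List A} (h : Sim v w) (hv : v ≠ []) :
    Option.Rel Sim (circ0 v) (circ0 w) ∧ star0 v = star0 w := by
  obtain ⟨p, a, hp⟩ := exists_dec v hv
  obtain ⟨q, hpq, hq⟩ := hp.of_sim h
  rw [hp.circ0_eq, hq.circ0_eq, hp.star0_eq, hq.star0_eq]
  exact ⟨Option.Rel.some hpq, rfl⟩

/-- Right multiplication by letters already present can be undone modulo `∼`: the words `w` and
`w x` are `R`-related. -/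
theorem exists_sim_append (w x : List A) (hx : ∀ c ∈ x, c ∈ w) :
    ∃ s, Sim (w ++ x ++ s) w := by
  induction x using List.reverseRecOn with
  | nil => exact ⟨[], by simpa using Sim.refl w⟩
  | append_singleton x c ih =>
    obtain ⟨s, hs⟩ := ih fun d hd => hx d (by simp [hd])
    obtain ⟨p, q, hpq⟩ := List.append_of_mem (hx c (by simp))
    -- With `w = p c q`, the word `w x c (q x)` ends in the square of `c q x`.
    refine ⟨q ++ x ++ s, Sim.trans ?_ hs⟩
    have := ((Sim.refl p).append (Sim.sq (c :: q ++ x))).append (Sim.refl s)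
    simpa [hpq] using this

/-- Multiplying by letters of `w` between two copies of `w` has no effect modulo `∼`. -/
theorem sim_sandwich (w x : List A) (hx : ∀ c ∈ x, c ∈ w) : Sim (w ++ x ++ w) w := by
  obtain ⟨s, hs⟩ := exists_sim_append w (x ++ w) (by
    intro c hc
    rcases List.mem_append.1 hc with h | h
    exacts [hx c h, h])
  -- With `e = w x w` and `e s ∼ w`:  `e ∼ e w ∼ e e s ∼ e s ∼ w`.
  have h₁ : Sim (w ++ x ++ w) (w ++ x ++ w ++ w) := by
    have := (Sim.refl (w ++ x)).append (Sim.sq w).symm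
    simpa using this
  have hs' : Sim (w ++ x ++ w ++ s) w := by simpa using hs
  have h₂ : Sim (w ++ x ++ w ++ w) (w ++ x ++ w ++ (w ++ x ++ w ++ s)) :=
    (Sim.refl _).append hs'.symm
  have h₃ : Sim (w ++ x ++ w ++ (w ++ x ++ w ++ s)) (w ++ x ++ w ++ s) := by
    have := (Sim.sq (w ++ x ++ w)).append (Sim.refl s)
    simpa using this
  exact h₁.trans (h₂.trans (h₃.trans hs'))

/-- A word is `∼`-equivalent to the product of any prefix and any suffix that have the same
content as the whole word. -/
theorem sim_of_prefix_suffix {w P Q r l : List A} (hP : w = P ++ r) (hQ : w = l ++ Q)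
    (hPw : ∀ x ∈ w, x ∈ P) (hQw : ∀ x ∈ w, x ∈ Q) : Sim w (P ++ Q) := by
  have hPsub : ∀ x ∈ P, x ∈ w := fun x hx => by rw [hP]; simp [hx]
  have hQsub : ∀ x ∈ Q, x ∈ w := fun x hx => by rw [hQ]; simp [hx]
  have hww : w ++ w = P ++ (r ++ l) ++ Q := by
    calc w ++ w = (P ++ r) ++ (l ++ Q) := by rw [← hP, ← hQ]
      _ = P ++ (r ++ l) ++ Q := by simp
  have h₁ : Sim w (P ++ (r ++ l) ++ Q) := hww ▸ (Sim.sq w).symm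
  have h₂ : Sim (P ++ (r ++ l) ++ Q) ((P ++ Q ++ P) ++ (r ++ l) ++ (Q ++ P ++ Q)) :=
    ((sim_sandwich P Q fun c hc => hPw c (hQsub c hc)).symm.append (Sim.refl _)).append
      (sim_sandwich Q P fun c hc => hQw c (hPsub c hc)).symm
  have h₃ : Sim ((P ++ Q) ++ (P ++ (r ++ l) ++ Q) ++ (P ++ Q)) (P ++ Q) := by
    refine sim_sandwich _ _ fun c hc => ?_
    rw [← hww] at hc
    exact List.mem_append_left _ (hPw c (by simpa using hc))
  refine h₁.trans (h₂.trans ?_)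
  simpa using h₃

/-- A nonempty word is `∼`-equivalent to `(w ∘ 0)(w ∗ 0)(w ∗ 1)(w ∘ 1)`. -/
theorem sim_factorization [DecidableEq A] (w : List A) (hw : w ≠ []) :
    ∃ p a b q, circ0 w = some p ∧ star0 w = some a ∧ star1 w = some b ∧ circ1 w = some q ∧
      Sim w ((p ++ [a]) ++ (b :: q)) := by
  obtain ⟨p, a, hp⟩ := exists_dec w hw
  obtain ⟨q, b, hq⟩ := exists_dec w.reverse (by simpa using hw)
  refine ⟨p, a, b, q.reverse, hp.circ0_eq, hp.star0_eq, hq.star0_eq, by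
    simp [circ1, hq.circ0_eq], ?_⟩
  obtain ⟨-, ⟨r, hr⟩, hpall⟩ := hp
  obtain ⟨-, ⟨l, hl⟩, hqall⟩ := hq
  refine sim_of_prefix_suffix (r := r) (l := l.reverse) (by simp [hr]) ?_ ?_ ?_
  · have := congrArg List.reverse hl
    simpa using this
  · intro x hx
    simpa [or_comm] using hpall x hx
  · intro x hx
    simpa using hqall x (by simpa using hx)

/-- **Green–Rees Theorem.** For nonempty words `v, w ∈ A⁺`, `v ∼ w` iff
`cont v = cont w`, `v ∘ α ∼ w ∘ α` for every `α ∈ {0,1}`, and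
`v ∗ α = w ∗ α` for every `α ∈ {0,1}`. -/
theorem green_rees [Nonempty A] [DecidableEq A] (v w : List A)
    (hv : v ≠ []) (hw : w ≠ []) :
    Sim v w ↔
      cont v = cont w ∧
      (∀ b : Bool, Option.Rel Sim (circb v b) (circb w b)) ∧
      (∀ b : Bool, starb v b = starb w b) := by
  constructor
  · intro h
    obtain ⟨hc₀, hs₀⟩ := h.left_data hv
    obtain ⟨hc₁, hs₁⟩ := h.reverse.left_data (by simpa using hv)
    refine ⟨?_, ?_, ?_⟩
    · ext x
      simpa [cont] using h.mem_iff x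
    · rintro (_ | _)
      · exact hc₀
      · change Option.Rel Sim ((circ0 v.reverse).map _) ((circ0 w.reverse).map _)
        generalize circ0 v.reverse = x, circ0 w.reverse = y at hc₁ ⊢
        cases hc₁ with
        | some h => exact Option.Rel.some h.reverse
        | none => exact Option.Rel.none
    · rintro (_ | _)
      exacts [hs₀, hs₁]
  · rintro ⟨-, hc, hs⟩
    obtain ⟨p, a, b, q, hp, ha, hb, hq, h⟩ := sim_factorization v hv
    obtain ⟨p', a', b', q', hp', ha', hb', hq', h'⟩ := sim_factorization w hw
    have hc₀ : Option.Rel Sim (circ0 v) (circ0 w) := hc false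
    have hc₁ : Option.Rel Sim (circ1 v) (circ1 w) := hc true
    have hs₀ : star0 v = star0 w := hs false
    have hs₁ : star1 v = star1 w := hs true
    rw [hp, hp'] at hc₀
    rw [hq, hq'] at hc₁
    rw [ha, ha', Option.some_inj] at hs₀
    rw [hb, hb', Option.some_inj] at hs₁
    subst hs₀ hs₁
    cases hc₀ with
    | some hpp =>
      cases hc₁ with
      | some hqq =>
        refine h.trans (Sim.trans ?_ h'.symm)
        exact (hpp.append (Sim.refl [a])).append ((Sim.refl [b]).append hqq)

end FreeBand
end

section
/- For every nonempty word w ∈ A⁺, w ∼ (w∘0)·(w∗0)·(w∗1)·(w∘1), i.e. the concatenation of the maximal proper-content prefix of w, the letter w∗0, the letter w∗1, and the maximal proper-content suffix of w represents the same element of the free band as w. -/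
/-!
Write `w = u ++ x = y ++ v`, where `u` is the prefix `w ∘ 0` followed by the letter `w ∗ 0`, and
`v` is the letter `w ∗ 1` followed by the suffix `w ∘ 1`.  By maximality of `w ∘ 0` and `w ∘ 1`,
both `u` and `v` have the full content of `w` (`exists_eq_append_of_circ0_star0`).

Modulo `∼`, words whose letters all occur in `u` are absorbed between two copies of `u`:
`u x u ∼ u` (`Sim.sandwich`).  It follows that `u t v ∼ u v` whenever `u` and `v` have the same
content and `t` has no other letters (`Sim.drop_middle`): elements of a free band with a common
content form a rectangular band.  Therefore `w ∼ w w = u (x y) v ∼ u v`.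
-/

/-!
Common definitions: words over an alphabet `A` are `List A`; the free monoid
operation is `++` with identity `[]`.  `false` plays the role of `0` and
`true` the role of `1` in `{0,1}*`.
-/

namespace FreeBand

variable {A : Type*}

theorem Sim.append_left (u : List A) {v v' : List A} (h : Sim v v') : Sim (u ++ v) (u ++ v') :=
  .append (.refl u) h

theorem Sim.append_right {u u' : List A} (h : Sim u u') (v : List A) : Sim (u ++ v) (u' ++ v) :=
  .append h (.refl v)

/-- In the free band, `u` lies in the right ideal generated by `u x` as soon as every letter of
`x` occurs in `u`.  For a single letter `c` with `u = u₁ c u₂` this is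
`u₁ c u₂ ∼ u₁ (c u₂) (c u₂)`; longer words `x` are absorbed one letter at a time. -/
theorem Sim.exists_absorb (u x : List A) (h : x ⊆ u) : ∃ y, Sim u (u ++ x ++ y) := by
  induction x using List.reverseRecOn with
  | nil => exact ⟨[], by simpa using Sim.refl u⟩
  | append_singleton x c ih =>
    obtain ⟨y, hy⟩ := ih fun d hd => h (List.mem_append_left _ hd)
    obtain ⟨u₁, u₂, rfl⟩ :=
      List.append_of_mem (h (List.mem_append_right x (List.mem_singleton_self c)))
    -- the factor `c u₂ x` gets doubled: `u₁ (c u₂ x) y ∼ u₁ (c u₂ x) (c u₂ x) y`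
    refine ⟨u₂ ++ x ++ y, hy.trans ?_⟩
    simpa using ((Sim.sq (c :: u₂ ++ x)).symm.append_right y).append_left u₁

/-- If every letter of `x` occurs in `u`, then `u x u ∼ u`. -/
theorem Sim.sandwich {u x : List A} (h : x ⊆ u) : Sim (u ++ x ++ u) u := by
  obtain ⟨z, hz⟩ := Sim.exists_absorb u x h
  have h₁ : Sim (u ++ x ++ u) (u ++ x ++ (u ++ x ++ z)) := hz.append_left _
  have h₂ : Sim (u ++ x ++ (u ++ x ++ z)) (u ++ x ++ z) := by
    simpa only [List.append_assoc] using (Sim.sq (u ++ x)).append_right z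
  exact (h₁.trans h₂).trans hz.symm

/-- The rectangular band identity `u t v ∼ u v` for words `u`, `v` with the same letters and `t`
with no others. -/
theorem Sim.drop_middle {u t v : List A} (huv : u ⊆ v) (hvu : v ⊆ u) (ht : t ⊆ u) :
    Sim (u ++ t ++ v) (u ++ v) := by
  have h₁ : Sim (u ++ t ++ v) (u ++ t ++ (v ++ u ++ v)) := (Sim.sandwich huv).symm.append_left _
  have h₂ : Sim (u ++ t ++ (v ++ u ++ v)) (u ++ v) := by
    simpa only [List.append_assoc] using
      (Sim.sandwich (List.append_subset.2 ⟨ht, hvu⟩)).append_right v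
  exact h₁.trans h₂

/-- A prefix of `w` longer than `w ∘ 0` has all the letters of `w`.  Adding one letter raises the
size of the content by at most one, so, going down from the whole word, the size could leave
`(cont w).card` only at the value `(cont w).card - 1`, which no prefix longer than `w ∘ 0` has. -/
theorem card_cont_take_of_prefLen_lt [DecidableEq A] (w : List A) {m : ℕ} (hm : m ≤ w.length)
    (hk : prefLen w < m) : (cont (w.take m)).card = (cont w).card := by
  induction hm using Nat.decreasingInduction with
  | self => rw [List.take_length]
  | of_succ m hm ih =>
    have hne : (cont (w.take m)).card ≠ (cont w).card - 1 :=
      Nat.findGreatest_is_greatest (P := fun k => (cont (w.take k)).card = (cont w).card - 1)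
        hk hm.le
    have hstep : (cont (w.take (m + 1))).card ≤ (cont (w.take m)).card + 1 := by
      rw [← List.take_append_getElem hm, cont, List.toFinset_append]
      exact (Finset.card_union_le _ _).trans (by simp [cont])
    have hle : (cont (w.take m)).card ≤ (cont w).card :=
      Finset.card_le_card fun c hc => by
        simp only [cont, List.mem_toFinset] at hc ⊢
        exact List.mem_of_mem_take hc
    have := ih (by omega)
    omega

/-- The prefix `w ∘ 0` extended by the letter `w ∗ 0` is a prefix of `w` having all its letters. -/
theorem exists_eq_append_of_circ0_star0 [DecidableEq A] {w p : List A} {a : A}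
    (hp : circ0 w = some p) (ha : star0 w = some a) :
    ∃ x, w = p ++ [a] ++ x ∧ w ⊆ p ++ [a] := by
  obtain ⟨hlt, hget⟩ := List.getElem?_eq_some_iff.1 ha
  have hp' : w.take (prefLen w) = p := by
    unfold circ0 at hp
    split_ifs at hp
    exact Option.some.inj hp
  have htake : p ++ [a] = w.take (prefLen w + 1) := by
    rw [← List.take_append_getElem hlt, hp', hget]
  rw [htake]
  refine ⟨w.drop (prefLen w + 1), (List.take_append_drop _ _).symm, ?_⟩
  have hcont : cont (w.take (prefLen w + 1)) = cont w :=
    Finset.eq_of_subset_of_card_le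
      (fun c hc => by
        simp only [cont, List.mem_toFinset] at hc ⊢
        exact List.mem_of_mem_take hc)
      (card_cont_take_of_prefLen_lt w hlt (Nat.lt_succ_self _)).ge
  intro c hc
  have : c ∈ cont (w.take (prefLen w + 1)) := hcont ▸ List.mem_toFinset.2 hc
  exact List.mem_toFinset.1 this

/-- For every nonempty word `w`, `w ∼ (w∘0)·(w∗0)·(w∗1)·(w∘1)`. -/
theorem sim_decomposition [Nonempty A] [DecidableEq A] (w : List A)
    (hw : w ≠ []) (p s : List A) (a b : A)
    (hp : circ0 w = some p) (ha : star0 w = some a)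
    (hb : star1 w = some b) (hs : circ1 w = some s) :
    Sim w (p ++ a :: b :: s) := by
  obtain ⟨x, hx, hxs⟩ := exists_eq_append_of_circ0_star0 hp ha
  obtain ⟨y, hy, hys⟩ : ∃ y, w = y ++ b :: s ∧ w ⊆ b :: s := by
    obtain ⟨q, hq, rfl⟩ := Option.map_eq_some_iff.1 hs
    obtain ⟨y, hy, hys⟩ := exists_eq_append_of_circ0_star0 hq hb
    refine ⟨y.reverse, ?_, fun c hc => ?_⟩
    · simpa using congrArg List.reverse hy
    · simpa [or_comm] using hys (List.mem_reverse.2 hc)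
  have hu : p ++ [a] ⊆ w := by rw [hx]; exact List.subset_append_left _ _
  have hxw : x ⊆ w := by rw [hx]; exact List.subset_append_right _ _
  have hv : b :: s ⊆ w := by rw [hy]; exact List.subset_append_right _ _
  have hyw : y ⊆ w := by rw [hy]; exact List.subset_append_left _ _
  have hww : w ++ w = p ++ [a] ++ (x ++ y) ++ b :: s := by
    calc w ++ w = (p ++ [a] ++ x) ++ (y ++ b :: s) := congrArg₂ (· ++ ·) hx hy
      _ = _ := by simp only [List.append_assoc]
  have h := Sim.drop_middle (t := x ++ y) (fun _ h => hys (hu h)) (fun _ h => hxs (hv h))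
    (List.append_subset.2 ⟨fun _ h => hxs (hxw h), fun _ h => hxs (hyw h)⟩)
  rw [← hww] at h
  simpa using (Sim.sq w).symm.trans h

end FreeBand
end

section
/- For all v, w ∈ A* and every α ∈ {0,1}* such that (vw)∘α is defined, there exists a word u with (vw)∘α ∼ u, where u belongs to the set {(v∘1^i)·(w∘0^j) : 0 ≤ i ≤ |cont(v)|, 0 ≤ j ≤ |cont(w)|} ∪ {v∘β : β ∈ {0,1}*, v∘β defined} ∪ {w∘γ : γ ∈ {0,1}*, w∘γ defined}. -/
/-!
The conclusion holds with equality of words in place of `∼`. The word `w ∘ 0` is the prefix `p` in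
a factorization `w = p a s` where the letter `a` does not occur in `p` and every letter of `s`
occurs in `p a` (`circ0_eq_some_iff`); iterating, every prefix of `w` followed by a letter new to
it is some `w ∘ 0^j` (`exists_circw_of_split`).

For a product `v w`, the letter `a` lies in `w` or in `v`. In the first case the prefix is `v p'`,
where `p'` is followed in `w` by a letter new to `p'`, so `(v w) ∘ 0 = v (w ∘ 0^j)`; in the second
case `(v w) ∘ 0 = v ∘ 0` (`circ0_append`). Reversal gives the corresponding statement for `∘ 1`
(`circ1_append`). Hence each step either stays among the products `(v ∘ 1^i)(w ∘ 0^j)` or moves to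
one of the two factors, where it remains: induction on `α` (`circw_append_eq`). The
bounds on `i` and `j` hold because each step lowers the size of the content.
-/

/-!
Common definitions: words over an alphabet `A` are `List A`; the free monoid
operation is `++` with identity `[]`.  `false` plays the role of `0` and
`true` the role of `1` in `{0,1}*`.
-/

namespace FreeBand

variable {A : Type*}

/-- A word `p ++ a :: s` in which `a` is new after `p`, and nothing is new after `a`, has
`∘ 0`-value `p`. -/
theorem circ0_of_split [DecidableEq A] {p s : List A} {a : A} (ha : a ∉ p)
    (hs : ∀ x ∈ s, x = a ∨ x ∈ p) : circ0 (p ++ a :: s) = some p := by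
  have hcont : cont (p ++ a :: s) = insert a (cont p) := by
    ext x
    have := hs x
    simp only [cont, List.mem_toFinset, List.mem_append, List.mem_cons, Finset.mem_insert]
    tauto
  have ha' : a ∉ cont p := by simpa [cont] using ha
  have hlen : prefLen (p ++ a :: s) = p.length := by
    rw [prefLen, Nat.findGreatest_eq_iff]
    refine ⟨by simp, fun _ => ?_, fun {n} hn _ h => ?_⟩
    · rw [hcont, Finset.card_insert_of_notMem ha']
      simp
    · -- A prefix longer than `p` already contains `a`, hence has full content.
      obtain ⟨m, rfl⟩ : ∃ m, n = p.length + (m + 1) := ⟨n - p.length - 1, by omega⟩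
      rw [hcont, Finset.card_insert_of_notMem ha', List.take_length_add_append,
        List.take_succ_cons] at h
      have hsub : insert a (cont p) ⊆ cont (p ++ a :: s.take m) := by
        intro x
        simp only [cont, List.mem_toFinset, List.mem_append, List.mem_cons, Finset.mem_insert]
        tauto
      have := Finset.card_le_card hsub
      rw [Finset.card_insert_of_notMem ha'] at this
      omega
  simp [circ0, hlen]

theorem exists_split {w : List A} (hw : w ≠ []) :
    ∃ p a s, w = p ++ a :: s ∧ a ∉ p ∧ ∀ x ∈ s, x = a ∨ x ∈ p := by
  induction w using List.reverseRecOn with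
  | nil => exact absurd rfl hw
  | append_singleton l x ih =>
    by_cases hx : x ∈ l
    · obtain ⟨p, a, s, rfl, ha, hs⟩ := ih (List.ne_nil_of_mem hx)
      refine ⟨p, a, s ++ [x], by simp, ha, fun y hy => ?_⟩
      have := hs y
      simp only [List.mem_append, List.mem_cons, List.not_mem_nil, or_false] at hx hy
      have := hs x
      rcases hy with hy | rfl <;> tauto
    · exact ⟨l, x, [], rfl, hx, by simp⟩

/-- Structural description of `w ∘ 0`, replacing the counting definition. -/
theorem circ0_eq_some_iff [DecidableEq A] {w p : List A} :
    circ0 w = some p ↔ ∃ a s, w = p ++ a :: s ∧ a ∉ p ∧ ∀ x ∈ s, x = a ∨ x ∈ p := by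
  constructor
  · intro h
    have hw : w ≠ [] := by
      rintro rfl
      simp [circ0] at h
    obtain ⟨q, a, s, rfl, ha, hs⟩ := exists_split hw
    rw [circ0_of_split ha hs, Option.some_inj] at h
    subst h
    exact ⟨a, s, rfl, ha, hs⟩
  · rintro ⟨a, s, rfl, ha, hs⟩
    exact circ0_of_split ha hs

theorem circ1_eq_some_iff [DecidableEq A] {w p : List A} :
    circ1 w = some p ↔ circ0 w.reverse = some p.reverse := by
  rw [circ1, Option.map_eq_some_iff]
  constructor
  · rintro ⟨q, hq, rfl⟩
    simpa using hq
  · intro h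
    exact ⟨_, h, by simp⟩

theorem circw_append [DecidableEq A] (w : List A) (β γ : List Bool) :
    circw w (β ++ γ) = (circw w β).bind fun x => circw x γ := by
  induction β generalizing w with
  | nil => rfl
  | cons b β ih => simp only [List.cons_append, circw, ih, Option.bind_assoc]

/-- Every prefix of `w` followed in `w` by a letter that is new after it is an iterate
`w ∘ 0^j`. -/
theorem exists_circw_of_split [DecidableEq A] {a : A} {p : List A} (ha : a ∉ p) (s : List A) :
    ∃ j, circw (p ++ a :: s) (List.replicate j false) = some p := by
  induction s using List.reverseRecOn with
  | nil => exact ⟨1, by simp [circw, circb, circ0_of_split ha]⟩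
  | append_singleton s x ih =>
    obtain ⟨j, hj⟩ := ih
    by_cases hx : x ∈ p ++ a :: s
    · -- A repeated final letter changes no `∘ 0`-value; `j = 0` is impossible by length.
      cases j with
      | zero => simp [circw] at hj
      | succ j =>
        refine ⟨j + 1, ?_⟩
        simp only [List.replicate_succ, circw, circb, cond_false] at hj ⊢
        obtain ⟨q, hq, hqj⟩ := Option.bind_eq_some_iff.1 hj
        refine Option.bind_eq_some_iff.2 ⟨q, ?_, hqj⟩
        obtain ⟨b, t, he, hb, ht⟩ := circ0_eq_some_iff.1 hq
        refine circ0_eq_some_iff.2 ⟨b, t ++ [x], ?_, hb, ?_⟩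
        · rw [← List.cons_append, ← List.append_assoc, he]
          simp
        · intro y hy
          rw [he] at hx
          have := ht x
          have := ht y
          simp only [List.mem_append, List.mem_cons, List.not_mem_nil, or_false] at hx hy
          rcases hy with hy | rfl <;> tauto
    · refine ⟨j + 1, ?_⟩
      have h0 : circ0 (p ++ a :: (s ++ [x])) = some (p ++ a :: s) :=
        circ0_eq_some_iff.2 ⟨x, [], by simp, hx, by simp⟩
      simpa [List.replicate_succ, circw, circb, h0] using hj

/-- One step of `∘ 0` on a product: the new letter lies in `w` or in `v`. -/
theorem circ0_append [DecidableEq A] {v w u : List A} (h : circ0 (v ++ w) = some u) :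
    (∃ j wj, circw w (List.replicate j false) = some wj ∧ u = v ++ wj) ∨ circ0 v = some u := by
  obtain ⟨a, s, he, ha, hs⟩ := circ0_eq_some_iff.1 h
  rcases List.append_eq_append_iff.1 he with ⟨t, rfl, rfl⟩ | ⟨t, rfl, ht⟩
  · simp only [List.mem_append, not_or] at ha
    obtain ⟨j, hj⟩ := exists_circw_of_split ha.2 s
    exact .inl ⟨j, t, hj, rfl⟩
  · cases t with
    | nil =>
      -- The new letter is the first letter of `w`, so that `w ∘ 0^j` is empty.
      obtain ⟨j, hj⟩ := exists_circw_of_split (p := []) (a := a) (by simp) s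
      refine .inl ⟨j, [], ?_, by simp⟩
      rw [← hj, List.nil_append] at *
      simp_all
    | cons b t =>
      obtain ⟨rfl, rfl⟩ := List.cons.inj ht
      exact .inr (circ0_of_split ha fun x hx => hs x (by simp [hx]))

theorem circw_true_iff [DecidableEq A] {w x : List A} {j : ℕ} :
    circw w (List.replicate j true) = some x ↔
      circw w.reverse (List.replicate j false) = some x.reverse := by
  induction j generalizing w with
  | zero => simp [circw]
  | succ j ih =>
    simp only [List.replicate_succ, circw, circb, cond_true, cond_false,
      Option.bind_eq_some_iff, circ1_eq_some_iff, ih]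
    constructor
    · rintro ⟨y, h⟩
      exact ⟨_, h⟩
    · rintro ⟨y, h⟩
      exact ⟨y.reverse, by simpa using h⟩

/-- One step of `∘ 1` on a product, the mirror image of `circ0_append`. -/
theorem circ1_append [DecidableEq A] {v w u : List A} (h : circ1 (v ++ w) = some u) :
    (∃ i vi, circw v (List.replicate i true) = some vi ∧ u = vi ++ w) ∨ circ1 w = some u := by
  rw [circ1_eq_some_iff, List.reverse_append] at h
  rcases circ0_append h with ⟨j, x, hx, hu⟩ | h
  · exact .inl ⟨j, x.reverse, circw_true_iff.2 (by simpa using hx),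
      List.reverse_injective (by simpa using hu)⟩
  · exact .inr (circ1_eq_some_iff.2 h)

/-- Each application of `∘ 0` removes a letter from the content, which bounds the exponent. -/
theorem le_card_of_circw_false [DecidableEq A] {w x : List A} {j : ℕ}
    (h : circw w (List.replicate j false) = some x) : j ≤ (cont w).card := by
  induction j generalizing w with
  | zero => simp
  | succ j ih =>
    simp only [List.replicate_succ, circw, circb, cond_false] at h
    obtain ⟨q, hq, hx⟩ := Option.bind_eq_some_iff.1 h
    obtain ⟨a, s, rfl, ha, -⟩ := circ0_eq_some_iff.1 hq
    have hlt : (cont q).card < (cont (q ++ a :: s)).card := by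
      apply Finset.card_lt_card
      rw [Finset.ssubset_iff]
      refine ⟨a, by simpa [cont] using ha, fun y => ?_⟩
      simp only [cont, List.mem_toFinset, List.mem_append, List.mem_cons, Finset.mem_insert]
      tauto
    have := ih hx
    omega

theorem le_card_of_circw_true [DecidableEq A] {w x : List A} {j : ℕ}
    (h : circw w (List.replicate j true) = some x) : j ≤ (cont w).card := by
  simpa [cont] using le_card_of_circw_false (circw_true_iff.1 h)

/-- The decomposition with equality in place of `∼`; the bounds on the exponents follow from
definedness. -/
theorem circw_append_eq [DecidableEq A] {v w : List A} {α : List Bool} {u : List A}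
    (h : circw (v ++ w) α = some u) :
    (∃ (i j : ℕ) (vi wj : List A), circw v (List.replicate i true) = some vi ∧
        circw w (List.replicate j false) = some wj ∧ u = vi ++ wj) ∨
      (∃ β, circw v β = some u) ∨ ∃ γ, circw w γ = some u := by
  induction α generalizing v w with
  | nil => exact .inl ⟨0, 0, v, w, rfl, rfl, by simpa [circw, eq_comm] using h⟩
  | cons b α ih =>
    simp only [circw] at h
    obtain ⟨x, hx, hu⟩ := Option.bind_eq_some_iff.1 h
    cases b with
    | false =>
      rcases circ0_append hx with ⟨j, wj, hj, rfl⟩ | hv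
      · rcases ih hu with ⟨i, k, vi, wk, hi, hk, rfl⟩ | hβ | ⟨γ, hγ⟩
        · refine .inl ⟨i, j + k, vi, wk, hi, ?_, rfl⟩
          rw [List.replicate_add, circw_append, hj]
          exact hk
        · exact .inr (.inl hβ)
        · refine .inr (.inr ⟨List.replicate j false ++ γ, ?_⟩)
          rw [circw_append, hj]
          exact hγ
      · exact .inr (.inl ⟨false :: α, by simpa [circw, circb, hv] using hu⟩)
    | true =>
      rcases circ1_append hx with ⟨i, vi, hi, rfl⟩ | hw
      · rcases ih hu with ⟨k, j, vk, wj, hk, hj, rfl⟩ | ⟨β, hβ⟩ | hγ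
        · refine .inl ⟨i + k, j, vk, wj, ?_, hj, rfl⟩
          rw [List.replicate_add, circw_append, hi]
          exact hk
        · refine .inr (.inl ⟨List.replicate i true ++ β, ?_⟩)
          rw [circw_append, hi]
          exact hβ
        · exact .inr (.inr hγ)
      · exact .inr (.inr ⟨true :: α, by simpa [circw, circb, hw] using hu⟩)

/-- Every defined `(vw) ∘ α` is `∼`-equivalent to a word of the form
`(v∘1^i)·(w∘0^j)`, or to some `v ∘ β`, or to some `w ∘ γ`. -/
theorem circw_append_mem [Nonempty A] [DecidableEq A] (v w : List A)
    (α : List Bool) (u' : List A) (h : circw (v ++ w) α = some u') :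
    ∃ u : List A, Sim u' u ∧
      ((∃ (i j : ℕ) (vi wj : List A), i ≤ (cont v).card ∧ j ≤ (cont w).card ∧
          circw v (List.replicate i true) = some vi ∧
          circw w (List.replicate j false) = some wj ∧ u = vi ++ wj) ∨
       (∃ β : List Bool, circw v β = some u) ∨
       (∃ γ : List Bool, circw w γ = some u)) := by
  refine ⟨u', .refl u', ?_⟩
  rcases circw_append_eq h with ⟨i, j, vi, wj, hi, hj, hu⟩ | h | h
  · exact .inl ⟨i, j, vi, wj, le_card_of_circw_true hi, le_card_of_circw_false hj, hi, hj, hu⟩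
  · exact .inr (.inl h)
  · exact .inr (.inr h)

end FreeBand
end

section
/- Let w ∈ A⁺, let s = min(w∘0)·(w∗0) and t = (w∗1)·min(w∘1). Then there is at most one nonempty suffix of s that is also a prefix of t. -/
/-!
The letter `b = w ∗ 1` does not occur in `w ∘ 1`, by maximality of that suffix, and hence not in
`min (w ∘ 1)`, because `∼` preserves content. So `b` occurs in `t = b · min (w ∘ 1)` only as its
first letter. Two nonempty overlaps `v₁`, `v₂` are prefixes of `t`, so both begin with `b`; as
suffixes of `s` they are comparable, say `v₁` is a suffix of `v₂`. A proper suffix would give a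
second occurrence of `b` in `v₂`, hence in `t`.
-/


/-!
Common definitions: words over an alphabet `A` are `List A`; the free monoid
operation is `++` with identity `[]`.  `false` plays the role of `0` and
`true` the role of `1` in `{0,1}*`.
-/

namespace FreeBand

variable {A : Type*}

/-- The letter `r ∗ 0` is new: otherwise the prefix `r ∘ 0` could be lengthened by it without
changing its content, against maximality. -/
theorem star0_notMem [DecidableEq A] {r : List A} {b : A} (hb : star0 r = some b) :
    b ∉ r.take (prefLen r) := by
  intro hmem
  obtain ⟨hlt, hget⟩ := List.getElem?_eq_some_iff.mp hb
  have hne : prefLen r ≠ 0 := by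
    intro h0
    simp [h0] at hmem
  have hP : (cont (r.take (prefLen r))).card = (cont r).card - 1 :=
    Nat.findGreatest_of_ne_zero (P := fun k => (cont (r.take k)).card = (cont r).card - 1)
      rfl hne
  have hsucc : cont (r.take (prefLen r + 1)) = cont (r.take (prefLen r)) := by
    rw [List.take_succ_eq_append_getElem hlt, hget]
    ext x
    simp only [cont, List.mem_toFinset, List.mem_append, List.mem_singleton]
    constructor
    · rintro (h | rfl)
      exacts [h, hmem]
    · exact Or.inl
  exact Nat.findGreatest_is_greatest
    (P := fun k => (cont (r.take k)).card = (cont r).card - 1) (n := r.length)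
    (k := prefLen r + 1) (Nat.lt_succ_self _) hlt (by rw [hsucc]; exact hP)

theorem star1_notMem_circ1 [DecidableEq A] {w q : List A} {b : A}
    (hb : star1 w = some b) (hq : circ1 w = some q) : b ∉ q := by
  unfold circ1 circ0 at hq
  split_ifs at hq
  · simp at hq
  · simp only [Option.map_some, Option.some.injEq] at hq
    rw [← hq, List.mem_reverse]
    exact star0_notMem hb

/-- A word beginning with `b` is equal to each of its suffixes beginning with `b` if `b` does not
recur in it. -/
theorem eq_of_suffix_of_prefix {b : A} {n u v : List A} (hn : b ∉ n) (hu : u ≠ [])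
    (hup : u <+: b :: n) (hvp : v <+: b :: n) (huv : u <:+ v) : u = v := by
  have hv : v ≠ [] := by
    rintro rfl
    exact hu (List.suffix_nil.mp huv)
  obtain ⟨x, u', rfl⟩ := List.exists_cons_of_ne_nil hu
  obtain ⟨y, v', rfl⟩ := List.exists_cons_of_ne_nil hv
  obtain ⟨rfl, -⟩ := List.cons_prefix_cons.mp hup
  obtain ⟨rfl, hv'⟩ := List.cons_prefix_cons.mp hvp
  rcases List.suffix_cons_iff.mp huv with h | h
  · exact h
  · exact absurd (hv'.subset (h.subset List.mem_cons_self)) hn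

/-- With `s = min(w∘0)·(w∗0)` and `t = (w∗1)·min(w∘1)`, there is at most one
nonempty suffix of `s` that is also a prefix of `t`. -/
theorem at_most_one_overlap [Nonempty A] [Fintype A] [LinearOrder A]
    (mw : List A → List A) (hmw : ∀ w : List A, IsMinRep w (mw w))
    (w : List A) (hw : w ≠ []) (p q : List A) (a b : A)
    (hp : circ0 w = some p) (ha : star0 w = some a)
    (hb : star1 w = some b) (hq : circ1 w = some q)
    (v₁ v₂ : List A) (h1 : v₁ ≠ []) (h2 : v₂ ≠ [])
    (hs1 : v₁ <:+ mw p ++ [a]) (ht1 : v₁ <+: b :: mw q)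
    (hs2 : v₂ <:+ mw p ++ [a]) (ht2 : v₂ <+: b :: mw q) :
    v₁ = v₂ := by
  have hn : b ∉ mw q := fun h =>
    star1_notMem_circ1 hb hq (((hmw q).1.mem_iff b).mp h)
  rcases List.suffix_or_suffix_of_suffix hs1 hs2 with h | h
  · exact eq_of_suffix_of_prefix hn h1 ht1 ht2 h
  · exact (eq_of_suffix_of_prefix hn h2 ht2 ht1 h).symm

end FreeBand
end

section
/- For every word w ∈ A*: cont(w) = { w∗0^k : 1 ≤ k ≤ |cont(w)| }, and the letters w∗0^k for 1 ≤ k ≤ |cont(w)| are pairwise distinct. The dual statement holds with 0 replaced by 1: cont(w) = { w∗1^k : 1 ≤ k ≤ |cont(w)| } with the letters w∗1^k pairwise distinct. -/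
/-!
The argument is an induction on the size of the content. A nonempty word factors as
`w = v a u`, where `a` is the letter whose first occurrence in `w` comes last, so that `a` does not
occur in `v` and `cont w = cont v ∪ {a}` (`exists_last_new`). Every prefix longer than `v` already has
full content, hence `w ∘ 0 = v` and `w ∗ 0 = a`; by reversal the same splitting of the content holds
for `w ∘ 1` and `w ∗ 1` (`exists_step`). Since `w ∗ β^(k+1) = (w ∘ β) ∗ β^k` for `k ≥ 1`, the letter
`w ∗ β` followed by the letters `v ∗ β^k` of `v = w ∘ β` lists `cont w` without repetition.
-/

/-!
Common definitions: words over an alphabet `A` are `List A`; the free monoid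
operation is `++` with identity `[]`.  `false` plays the role of `0` and
`true` the role of `1` in `{0,1}*`.
-/

namespace FreeBand

variable {A : Type*}

/-- A nonempty word splits at the letter whose first occurrence comes last. -/
theorem exists_last_new [DecidableEq A] (w : List A) (hw : w ≠ []) :
    ∃ (v : List A) (a : A) (u : List A),
      w = v ++ a :: u ∧ a ∉ cont v ∧ cont w = insert a (cont v) := by
  induction w using List.reverseRecOn with
  | nil => exact absurd rfl hw
  | append_singleton w x ih =>
    by_cases hx : x ∈ cont w
    · have hne : w ≠ [] := by
        rintro rfl
        simp [cont] at hx
      obtain ⟨v, a, u, h1, h2, h3⟩ := ih hne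
      refine ⟨v, a, u ++ [x], by simp [h1], h2, ?_⟩
      rw [← h3]
      ext y
      simp only [cont, List.mem_toFinset, List.mem_append, List.mem_singleton] at hx ⊢
      constructor
      · rintro (h | rfl)
        · exact h
        · exact hx
      · exact Or.inl
    · refine ⟨w, x, [], rfl, hx, ?_⟩
      ext y
      simp [cont]

theorem prefLen_eq [DecidableEq A] (v : List A) (a : A) (u : List A) (ha : a ∉ cont v)
    (hc : cont (v ++ a :: u) = insert a (cont v)) : prefLen (v ++ a :: u) = v.length := by
  have hcard : (cont (v ++ a :: u)).card = (cont v).card + 1 := by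
    rw [hc, Finset.card_insert_of_notMem ha]
  unfold prefLen
  rw [Nat.findGreatest_eq_iff]
  refine ⟨by simp, fun _ => by simp [hcard], ?_⟩
  intro k hk _ hP
  -- A prefix longer than `v` contains `v a`, hence has at least the content of the whole word.
  have hsub : insert a (cont v) ⊆ cont ((v ++ a :: u).take k) := by
    obtain ⟨m, rfl⟩ : ∃ m, k = v.length + (m + 1) := ⟨k - v.length - 1, by omega⟩
    rw [List.take_length_add_append]
    intro y
    simp only [cont, Finset.mem_insert, List.mem_toFinset, List.mem_append, List.take_succ_cons,
      List.mem_cons]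
    tauto
  have := Finset.card_le_card hsub
  rw [← hc] at this
  omega

/-- On a nonempty word both `w ∘ b` and `w ∗ b` are defined, and `w ∗ b` is exactly the letter that
`w ∘ b` lacks. -/
theorem exists_step [DecidableEq A] (w : List A) (hw : w ≠ []) (b : Bool) :
    ∃ (v : List A) (a : A), circb w b = some v ∧ starb w b = some a ∧ a ∉ cont v ∧
      cont w = insert a (cont v) := by
  have step0 : ∀ w : List A, w ≠ [] → ∃ (v : List A) (a : A), circ0 w = some v ∧
      star0 w = some a ∧ a ∉ cont v ∧ cont w = insert a (cont v) := by
    intro w hw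
    obtain ⟨v, a, u, rfl, ha, hc⟩ := exists_last_new w hw
    have hp := prefLen_eq v a u ha hc
    exact ⟨v, a, by simp [circ0, hp], by simp [star0, hp], ha, hc⟩
  cases b with
  | false => exact step0 w hw
  | true =>
    obtain ⟨v, a, h1, h2, h3, h4⟩ := step0 w.reverse (by simpa using hw)
    refine ⟨v.reverse, a, by simp [circb, circ1, h1], by simpa [starb, star1] using h2, ?_, ?_⟩
    · simpa [cont] using h3
    · simpa [cont] using h4

theorem starw_replicate_add_two [DecidableEq A] {w v : List A} {b : Bool}
    (h : circb w b = some v) (k : ℕ) :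
    starw w (List.replicate (k + 2) b) = starw v (List.replicate (k + 1) b) := by
  simp [List.replicate_succ, starw, h]

/-- The claim for powers of either letter `b` at once. -/
theorem star_powers [DecidableEq A] (b : Bool) (n : ℕ) :
    ∀ w : List A, (cont w).card = n →
    (∀ a : A, a ∈ cont w ↔ ∃ k : ℕ, 1 ≤ k ∧ k ≤ (cont w).card ∧
        starw w (List.replicate k b) = some a) ∧
    (∀ (k₁ k₂ : ℕ) (a₁ a₂ : A), 1 ≤ k₁ → k₁ ≤ (cont w).card →
        1 ≤ k₂ → k₂ ≤ (cont w).card →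
        starw w (List.replicate k₁ b) = some a₁ →
        starw w (List.replicate k₂ b) = some a₂ → a₁ = a₂ → k₁ = k₂) := by
  induction n with
  | zero =>
    intro w hw
    refine ⟨fun a => ?_, fun k₁ k₂ a₁ a₂ h1 h2 => by omega⟩
    rw [Finset.card_eq_zero.mp hw]
    simp only [Finset.notMem_empty, Finset.card_empty, false_iff]
    rintro ⟨k, h1, h2, -⟩
    omega
  | succ n ih =>
    intro w hw
    have hne : w ≠ [] := by
      rintro rfl
      simp [cont] at hw
    obtain ⟨v, c, hv, hs, hcv, hc⟩ := exists_step w hne b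
    have hn : (cont v).card = n := by
      rw [hc, Finset.card_insert_of_notMem hcv] at hw
      omega
    obtain ⟨ih1, ih2⟩ := ih v hn
    rw [hn] at ih1 ih2
    rw [hw]
    have h1 : starw w (List.replicate 1 b) = some c := hs
    have h2 := starw_replicate_add_two hv
    -- The letters `w ∗ b^k` with `k ≥ 2` lie in `cont v`, so they differ from `c = w ∗ b`.
    have key : ∀ k, k + 2 ≤ n + 1 → starw w (List.replicate (k + 2) b) ≠ some c := by
      intro k hk h
      rw [h2] at h
      exact hcv ((ih1 c).2 ⟨k + 1, by omega, by omega, h⟩)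
    have split : ∀ k, 1 ≤ k → k = 1 ∨ ∃ m, k = m + 2 := fun k hk => by
      rcases Nat.lt_or_ge k 2 with h | h
      · exact Or.inl (by omega)
      · exact Or.inr ⟨k - 2, by omega⟩
    constructor
    · intro a
      rw [hc, Finset.mem_insert]
      constructor
      · rintro (rfl | ha)
        · exact ⟨1, le_rfl, by omega, h1⟩
        · obtain ⟨k, hk1, hk2, hk⟩ := (ih1 a).1 ha
          obtain ⟨m, rfl⟩ : ∃ m, k = m + 1 := ⟨k - 1, by omega⟩
          exact ⟨m + 2, by omega, by omega, (h2 m).trans hk⟩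
      · rintro ⟨k, hk1, hk2, hk⟩
        obtain rfl | ⟨m, rfl⟩ : k = 1 ∨ ∃ m, k = m + 2 := split k hk1
        · left
          rw [h1] at hk
          exact (Option.some.inj hk).symm
        · right
          rw [h2] at hk
          exact (ih1 a).2 ⟨m + 1, by omega, by omega, hk⟩
    · rintro k₁ k₂ a _ p1 p2 q1 q2 e1 e2 rfl
      obtain rfl | ⟨m₁, rfl⟩ : k₁ = 1 ∨ ∃ m, k₁ = m + 2 := split k₁ p1
      all_goals obtain rfl | ⟨m₂, rfl⟩ : k₂ = 1 ∨ ∃ m, k₂ = m + 2 := split k₂ q1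
      · rfl
      · exact absurd (e2.trans (e1.symm.trans h1)) (key m₂ q2)
      · exact absurd (e1.trans (e2.symm.trans h1)) (key m₁ p2)
      · rw [h2] at e1 e2
        have := ih2 (m₁ + 1) (m₂ + 1) a a (by omega) (by omega) (by omega) (by omega) e1 e2 rfl
        omega

/-- `cont w = { w∗0^k : 1 ≤ k ≤ |cont w| }` with the letters `w∗0^k` pairwise
distinct, and dually with `0` replaced by `1`. -/
theorem cont_eq_star_powers [Nonempty A] [DecidableEq A] (w : List A) :
    ((∀ a : A, a ∈ cont w ↔ ∃ k : ℕ, 1 ≤ k ∧ k ≤ (cont w).card ∧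
        starw w (List.replicate k false) = some a) ∧
     (∀ (k₁ k₂ : ℕ) (a₁ a₂ : A), 1 ≤ k₁ → k₁ ≤ (cont w).card →
        1 ≤ k₂ → k₂ ≤ (cont w).card →
        starw w (List.replicate k₁ false) = some a₁ →
        starw w (List.replicate k₂ false) = some a₂ → a₁ = a₂ → k₁ = k₂)) ∧
    ((∀ a : A, a ∈ cont w ↔ ∃ k : ℕ, 1 ≤ k ∧ k ≤ (cont w).card ∧
        starw w (List.replicate k true) = some a) ∧
     (∀ (k₁ k₂ : ℕ) (a₁ a₂ : A), 1 ≤ k₁ → k₁ ≤ (cont w).card →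
        1 ≤ k₂ → k₂ ≤ (cont w).card →
        starw w (List.replicate k₁ true) = some a₁ →
        starw w (List.replicate k₂ true) = some a₂ → a₁ = a₂ → k₁ = k₂)) := by
  exact ⟨star_powers false _ w rfl, star_powers true _ w rfl⟩

end FreeBand
end
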